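/- arXiv:1404.0420 — 4 statements merged into one kernel-verified Lean document; each statement's English description precedes it below -/
import Mathlib

section
/- Let H be a Hopf algebra over a field K, (B, π) a quantum subgroup of H, and (L, η) a left B-module, and let L' = { w ∈ H ⊗ L : for all b ∈ B, (R ⊗ η_b)(w) = (ι ⊗ η_b)(w) } where R = (id_H ⊗ π) ∘ Δ. Then the assignment α(h ⊗ w) = (id_H ⊗ η_{π(h)})(w) for h ∈ H and w ∈ L' (on pure tensors w = h' ⊗ l, α(h ⊗ h' ⊗ l) = h' ⊗ η(π(h) ⊗ l)) takes values in L' and defines a left H-module structure on L': α(1 ⊗ w) = w and α(h ⊗ α(h' ⊗ w)) = α(hh' ⊗ w) for all h, h' ∈ H, w ∈ L'. -/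
open TensorProduct

/-- The subspace `L' = {w ∈ H ⊗ L : ∀ b ∈ B, (R ⊗ η_b)(w) = (ι ⊗ η_b)(w)}`, where
`R = (id_H ⊗ π) ∘ Δ`, `η_b(l) = η(b ⊗ l)` and `ι(h) = h ⊗ 1_B`. -/
noncomputable def inducedSubspace
    (K : Type*) [Field K]
    (H : Type*) [Ring H] [HopfAlgebra K H]
    (B : Type*) [Ring B] [Bialgebra K B]
    (π : H →ₐc[K] B)
    (L : Type*) [AddCommGroup L] [Module K L]
    (η : B ⊗[K] L →ₗ[K] L) : Submodule K (H ⊗[K] L) where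
  carrier := {w | ∀ b : B,
    TensorProduct.map
      ((TensorProduct.map (LinearMap.id : H →ₗ[K] H) (π : H →ₗ[K] B))
        ∘ₗ Coalgebra.comul)
      (η ∘ₗ TensorProduct.mk K B L b) w
    = TensorProduct.map ((TensorProduct.mk K H B).flip (1 : B))
        (η ∘ₗ TensorProduct.mk K B L b) w}
  add_mem' := by
    intro a b ha hb c
    simp only [Set.mem_setOf_eq] at *
    simp [map_add, ha c, hb c]
  zero_mem' := by
    intro b
    simp
  smul_mem' := by
    intro c w hw b
    simp only [Set.mem_setOf_eq] at *
    simp [map_smul, hw b]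


/-- The assignment `α(h ⊗ w) = (id_H ⊗ η_{π(h)})(w)` takes values in `L'` and defines
a left `H`-module structure on `L'`. -/
theorem inducedSubspace_module_structure
    (K : Type*) [Field K]
    (H : Type*) [Ring H] [HopfAlgebra K H]
    (B : Type*) [Ring B] [Bialgebra K B]
    (π : H →ₐc[K] B) (hπ : Function.Surjective π)
    (L : Type*) [AddCommGroup L] [Module K L]
    (η : B ⊗[K] L →ₗ[K] L)
    (hη1 : ∀ l : L, η ((1 : B) ⊗ₜ[K] l) = l)
    (hη2 : ∀ (b b' : B) (l : L),
      η (b ⊗ₜ[K] η (b' ⊗ₜ[K] l)) = η ((b * b') ⊗ₜ[K] l)) :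
    ∃ α : H ⊗[K] (inducedSubspace K H B π L η) →ₗ[K] (inducedSubspace K H B π L η),
      -- α is given by α(h ⊗ w) = (id_H ⊗ η_{π(h)})(w)
      (∀ (h : H) (w : inducedSubspace K H B π L η),
        ((α (h ⊗ₜ[K] w) : inducedSubspace K H B π L η) : H ⊗[K] L)
          = TensorProduct.map (LinearMap.id : H →ₗ[K] H)
              (η ∘ₗ TensorProduct.mk K B L (π h)) (w : H ⊗[K] L)) ∧
      -- α is a left H-module structure on L'
      (∀ w : inducedSubspace K H B π L η, α ((1 : H) ⊗ₜ[K] w) = w) ∧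
      (∀ (h h' : H) (w : inducedSubspace K H B π L η),
        α (h ⊗ₜ[K] α (h' ⊗ₜ[K] w)) = α ((h * h') ⊗ₜ[K] w)) := by
  have key : ∀ b c : B, (η ∘ₗ TensorProduct.mk K B L b) ∘ₗ (η ∘ₗ TensorProduct.mk K B L c)
      = η ∘ₗ TensorProduct.mk K B L (b * c) := by
    intro b c
    ext l
    simp [hη2]
  have one : η ∘ₗ TensorProduct.mk K B L 1 = LinearMap.id := by
    ext l
    simp [hη1]
  have mem : ∀ (h : H) (w : inducedSubspace K H B π L η),
      TensorProduct.map (LinearMap.id : H →ₗ[K] H)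
        (η ∘ₗ TensorProduct.mk K B L (π h)) (w : H ⊗[K] L) ∈ inducedSubspace K H B π L η := by
    intro h w b
    have hw := w.2 (b * π h)
    rw [← LinearMap.comp_apply, ← LinearMap.comp_apply, ← TensorProduct.map_comp,
      ← TensorProduct.map_comp, key, LinearMap.comp_id, LinearMap.comp_id]
    exact hw
  let f : H →ₗ[K] inducedSubspace K H B π L η →ₗ[K] inducedSubspace K H B π L η :=
    LinearMap.mk₂ K (fun h w => ⟨_, mem h w⟩)
      (by
        intro m₁ m₂ w
        apply Subtype.ext
        simp [LinearMap.comp_add, TensorProduct.map_add_right])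
      (by
        intro c m w
        apply Subtype.ext
        simp [LinearMap.comp_smul, TensorProduct.map_smul_right])
      (by
        intro m w₁ w₂
        apply Subtype.ext
        simp)
      (by
        intro c m w
        apply Subtype.ext
        simp)
  have hf : ∀ (h : H) (w : inducedSubspace K H B π L η),
      ((TensorProduct.lift f (h ⊗ₜ[K] w) : inducedSubspace K H B π L η) : H ⊗[K] L)
        = TensorProduct.map (LinearMap.id : H →ₗ[K] H)
            (η ∘ₗ TensorProduct.mk K B L (π h)) (w : H ⊗[K] L) := by
    intro h w
    rw [TensorProduct.lift.tmul]
    rfl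
  refine ⟨TensorProduct.lift f, hf, ?_, ?_⟩
  · intro w
    apply Subtype.ext
    rw [hf, map_one, one, TensorProduct.map_id, LinearMap.id_apply]
  · intro h h' w
    apply Subtype.ext
    rw [hf, hf, hf, ← LinearMap.comp_apply, ← TensorProduct.map_comp, key, map_mul π,
      LinearMap.comp_id]
end

section
/- Let H be a Hopf algebra over a field K, (B, π) a quantum subgroup of H, and (L, η) a left B-module, and let L' = { w ∈ H ⊗ L : for all b ∈ B, (R ⊗ η_b)(w) = (ι ⊗ η_b)(w) } where R = (id_H ⊗ π) ∘ Δ. Then the restriction β of Δ ⊗ id_L to L' (on pure tensors, β(h ⊗ l) = Δ(h) ⊗ l) takes values in H ⊗ L' and defines a left H-comodule structure on L': (ε ⊗ id_{L'}) ∘ β equals the canonical isomorphism L' ≅ K ⊗ L', and (Δ ⊗ id_{L'}) ∘ β = (id_H ⊗ β) ∘ β. -/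
open TensorProduct

section aux
variable {K H B L : Type*} [Field K] [AddCommGroup H] [Module K H] [Coalgebra K H]
  [AddCommGroup B] [Module K B] [AddCommGroup L] [Module K L]

lemma aux_comm (R : H →ₗ[K] H ⊗[K] B)
    (hR : (TensorProduct.map LinearMap.id R) ∘ₗ Coalgebra.comul
      = (TensorProduct.assoc K H H B).toLinearMap ∘ₗ
        (TensorProduct.map Coalgebra.comul LinearMap.id) ∘ₗ R) :
    (TensorProduct.map (LinearMap.id : H →ₗ[K] H)
        (TensorProduct.map R (LinearMap.id : L →ₗ[K] L))) ∘ₗ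
      (TensorProduct.assoc K H H L).toLinearMap ∘ₗ
        (TensorProduct.map Coalgebra.comul (LinearMap.id : L →ₗ[K] L))
    = ((TensorProduct.assoc K H (H ⊗[K] B) L).toLinearMap ∘ₗ
        (TensorProduct.map ((TensorProduct.assoc K H H B).toLinearMap ∘ₗ
          (TensorProduct.map Coalgebra.comul LinearMap.id)) LinearMap.id)) ∘ₗ
      (TensorProduct.map R (LinearMap.id : L →ₗ[K] L)) := by
  have key : (TensorProduct.map (LinearMap.id : H →ₗ[K] H)
        (TensorProduct.map R (LinearMap.id : L →ₗ[K] L))) ∘ₗ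
      (TensorProduct.assoc K H H L).toLinearMap =
      (TensorProduct.assoc K H (H ⊗[K] B) L).toLinearMap ∘ₗ
        (TensorProduct.map (TensorProduct.map LinearMap.id R) LinearMap.id) := by
    ext a b l
    simp
  rw [← LinearMap.comp_assoc, key, LinearMap.comp_assoc, LinearMap.comp_assoc,
    ← TensorProduct.map_comp, ← TensorProduct.map_comp, hR, LinearMap.comp_assoc]

lemma aux_coassoc :
    (TensorProduct.map (LinearMap.id : H →ₗ[K] H)
      ((TensorProduct.assoc K H H L).toLinearMap ∘ₗ
        (TensorProduct.map Coalgebra.comul (LinearMap.id : L →ₗ[K] L)))) ∘ₗ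
      (TensorProduct.assoc K H H L).toLinearMap ∘ₗ
        (TensorProduct.map Coalgebra.comul (LinearMap.id : L →ₗ[K] L))
    = (TensorProduct.assoc K H H (H ⊗[K] L)).toLinearMap ∘ₗ
      (TensorProduct.map Coalgebra.comul LinearMap.id) ∘ₗ
      (TensorProduct.assoc K H H L).toLinearMap ∘ₗ
        (TensorProduct.map Coalgebra.comul (LinearMap.id : L →ₗ[K] L)) := by
  have h := aux_comm (L := L) (Coalgebra.comul (R := K) (A := H))
    Coalgebra.coassoc.symm
  have h2 : (TensorProduct.map (LinearMap.id : H →ₗ[K] H)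
      (TensorProduct.assoc K H H L).toLinearMap) ∘ₗ
      ((TensorProduct.assoc K H (H ⊗[K] H) L).toLinearMap ∘ₗ
        (TensorProduct.map ((TensorProduct.assoc K H H H).toLinearMap ∘ₗ
          (TensorProduct.map Coalgebra.comul LinearMap.id)) LinearMap.id)) =
      (TensorProduct.assoc K H H (H ⊗[K] L)).toLinearMap ∘ₗ
      (TensorProduct.map Coalgebra.comul LinearMap.id) ∘ₗ
      (TensorProduct.assoc K H H L).toLinearMap := by
    ext a b l
    simp only [TensorProduct.AlgebraTensorModule.curry_apply, LinearMap.restrictScalars_self,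
      TensorProduct.curry_apply, LinearMap.comp_apply, TensorProduct.map_tmul,
      LinearEquiv.coe_coe, TensorProduct.assoc_tmul, LinearMap.id_apply]
    induction (Coalgebra.comul (R := K) a) with
    | zero => simp
    | add x y hx hy => simp only [TensorProduct.add_tmul, map_add, hx, hy]
    | tmul x y => simp
  have h3 : (TensorProduct.map (LinearMap.id : H →ₗ[K] H)
      ((TensorProduct.assoc K H H L).toLinearMap ∘ₗ
        (TensorProduct.map Coalgebra.comul (LinearMap.id : L →ₗ[K] L)))) =
      (TensorProduct.map (LinearMap.id : H →ₗ[K] H)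
      (TensorProduct.assoc K H H L).toLinearMap) ∘ₗ (TensorProduct.map (LinearMap.id : H →ₗ[K] H)
        (TensorProduct.map Coalgebra.comul (LinearMap.id : L →ₗ[K] L))) := by
    rw [← TensorProduct.map_comp, LinearMap.id_comp]
  rw [h3, LinearMap.comp_assoc, h, ← LinearMap.comp_assoc, h2]
  rfl

lemma aux_counit (w : H ⊗[K] L) :
    TensorProduct.lid K (H ⊗[K] L) (TensorProduct.map Coalgebra.counit LinearMap.id
      (TensorProduct.assoc K H H L
        (TensorProduct.map Coalgebra.comul (LinearMap.id : L →ₗ[K] L) w))) = w := by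
  induction w with
  | zero => simp
  | add x y hx hy => simp only [map_add, hx, hy]
  | tmul a l =>
    have h : ∀ t : H ⊗[K] H, TensorProduct.lid K (H ⊗[K] L)
      (TensorProduct.map Coalgebra.counit LinearMap.id
      (TensorProduct.assoc K H H L (t ⊗ₜ l))) =
      (TensorProduct.lid K H (Coalgebra.counit.rTensor H t)) ⊗ₜ l := by
      intro t
      induction t with
      | zero => simp
      | add x y hx hy => simp only [TensorProduct.add_tmul, map_add, hx, hy]
      | tmul x y => simp [TensorProduct.smul_tmul']
    rw [TensorProduct.map_tmul, LinearMap.id_apply, h, Coalgebra.rTensor_counit_comul]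
    simp

/-- Abstract form. -/
lemma aux_main (S : Submodule K (H ⊗[K] L)) {M : Type*} [AddCommGroup M] [Module K M]
    (f : H ⊗[K] L →ₗ[K] M) (hS : S = LinearMap.ker f)
    (hf : ∀ w ∈ S, f.lTensor H (TensorProduct.assoc K H H L
        (TensorProduct.map Coalgebra.comul (LinearMap.id : L →ₗ[K] L) w)) = 0) :
    ∃ β : S →ₗ[K] H ⊗[K] S,
      ((TensorProduct.map (LinearMap.id : H →ₗ[K] H) S.subtype) ∘ₗ β
        = (TensorProduct.assoc K H H L).toLinearMap
            ∘ₗ (TensorProduct.map Coalgebra.comul (LinearMap.id : L →ₗ[K] L))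
            ∘ₗ S.subtype) ∧
      ((TensorProduct.map Coalgebra.counit (LinearMap.id : S →ₗ[K] S)) ∘ₗ β
        = (TensorProduct.lid K S).symm.toLinearMap) ∧
      ((TensorProduct.assoc K H H S).toLinearMap
          ∘ₗ (TensorProduct.map Coalgebra.comul (LinearMap.id : S →ₗ[K] S)) ∘ₗ β
        = (TensorProduct.map (LinearMap.id : H →ₗ[K] H) β) ∘ₗ β) := by
  have hinj : Function.Injective (S.subtype.lTensor H) :=
    Module.Flat.lTensor_preserves_injective_linearMap _ S.injective_subtype
  have hinj2 : Function.Injective ((S.subtype.lTensor H).lTensor H) :=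
    Module.Flat.lTensor_preserves_injective_linearMap _ hinj
  have hex : Function.Exact (S.subtype.lTensor H) (f.lTensor H) := by
    apply Module.Flat.lTensor_exact
    rw [LinearMap.exact_iff, Submodule.range_subtype, hS]
  let D : H ⊗[K] L →ₗ[K] H ⊗[K] (H ⊗[K] L) := (TensorProduct.assoc K H H L).toLinearMap
            ∘ₗ (TensorProduct.map Coalgebra.comul (LinearMap.id : L →ₗ[K] L))
  have hr : ∀ x : S, (D ∘ₗ S.subtype) x ∈ LinearMap.range (S.subtype.lTensor H) := by
    intro x
    exact (hex _).1 (hf x x.2)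
  let β : S →ₗ[K] H ⊗[K] S := (LinearEquiv.ofInjective _ hinj).symm.toLinearMap ∘ₗ
    (D ∘ₗ S.subtype).codRestrict _ hr
  have hβ : ∀ x, S.subtype.lTensor H (β x) = D x := by
    intro x
    have := LinearEquiv.ofInjective_symm_apply (f := S.subtype.lTensor H) (h := hinj) ((D ∘ₗ S.subtype).codRestrict _ hr x)
    exact this
  have hβ' : (S.subtype.lTensor H) ∘ₗ β = D ∘ₗ S.subtype := LinearMap.ext hβ
  clear_value β
  refine ⟨β, hβ', ?_, ?_⟩
  · ext1 x
    apply (TensorProduct.lid K S).injective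
    apply S.injective_subtype
    have h1 : ∀ t : H ⊗[K] S, S.subtype (TensorProduct.lid K S
        (TensorProduct.map Coalgebra.counit LinearMap.id t)) =
        TensorProduct.lid K (H ⊗[K] L) (TensorProduct.map Coalgebra.counit LinearMap.id
          (S.subtype.lTensor H t)) := by
      intro t
      induction t with
      | zero => simp
      | add x y hx hy => simp only [map_add, hx, hy]
      | tmul x y => simp
    rw [LinearMap.comp_apply, h1, hβ]
    refine (aux_counit (x : H ⊗[K] L)).trans ?_
    simp
  · ext1 x
    apply hinj2
    have h1 : ((S.subtype.lTensor H).lTensor H) ∘ₗ (TensorProduct.assoc K H H S).toLinearMap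
          ∘ₗ (TensorProduct.map Coalgebra.comul (LinearMap.id : S →ₗ[K] S)) =
        (TensorProduct.assoc K H H (H ⊗[K] L)).toLinearMap ∘ₗ
          (TensorProduct.map Coalgebra.comul LinearMap.id) ∘ₗ S.subtype.lTensor H := by
      have h0 : ((S.subtype.lTensor H).lTensor H) ∘ₗ (TensorProduct.assoc K H H S).toLinearMap
        = (TensorProduct.assoc K H H (H ⊗[K] L)).toLinearMap ∘ₗ
          (TensorProduct.map LinearMap.id S.subtype) := by
        ext a b s
        simp
      rw [← LinearMap.comp_assoc, h0, LinearMap.comp_assoc]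
      congr 1
      rw [LinearMap.lTensor, ← TensorProduct.map_comp, ← TensorProduct.map_comp]
      rfl
    have h2 := LinearMap.congr_fun h1 (β x)
    have h3 : ∀ t, (S.subtype.lTensor H).lTensor H (TensorProduct.map LinearMap.id β t) =
        D.lTensor H (S.subtype.lTensor H t) := by
      intro t
      change (S.subtype.lTensor H).lTensor H (β.lTensor H t) = _
      rw [← LinearMap.lTensor_comp_apply, ← LinearMap.lTensor_comp_apply, hβ']
    refine h2.trans ?_
    rw [LinearMap.comp_apply, LinearMap.comp_apply, LinearMap.comp_apply, h3, hβ]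
    exact (LinearMap.congr_fun (aux_coassoc (K := K) (H := H) (L := L)) (x : H ⊗[K] L)).symm

end aux

/-- The restriction `β` of `Δ ⊗ id_L` to `L'` takes values in `H ⊗ L'` and defines a
left `H`-comodule structure on `L'`. -/
theorem inducedSubspace_comodule_structure
    (K : Type*) [Field K]
    (H : Type*) [Ring H] [HopfAlgebra K H]
    (B : Type*) [Ring B] [Bialgebra K B]
    (π : H →ₐc[K] B) (hπ : Function.Surjective π)
    (L : Type*) [AddCommGroup L] [Module K L]
    (η : B ⊗[K] L →ₗ[K] L)
    (hη1 : ∀ l : L, η ((1 : B) ⊗ₜ[K] l) = l)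
    (hη2 : ∀ (b b' : B) (l : L),
      η (b ⊗ₜ[K] η (b' ⊗ₜ[K] l)) = η ((b * b') ⊗ₜ[K] l)) :
    ∃ β : (inducedSubspace K H B π L η) →ₗ[K]
        H ⊗[K] (inducedSubspace K H B π L η),
      -- β is the restriction of Δ ⊗ id_L to L'
      ((TensorProduct.map (LinearMap.id : H →ₗ[K] H)
          (inducedSubspace K H B π L η).subtype) ∘ₗ β
        = (TensorProduct.assoc K H H L).toLinearMap
            ∘ₗ (TensorProduct.map Coalgebra.comul (LinearMap.id : L →ₗ[K] L))
            ∘ₗ (inducedSubspace K H B π L η).subtype) ∧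
      -- β is a left H-comodule structure on L'
      ((TensorProduct.map Coalgebra.counit
          (LinearMap.id : (inducedSubspace K H B π L η) →ₗ[K]
            (inducedSubspace K H B π L η))) ∘ₗ β
        = (TensorProduct.lid K (inducedSubspace K H B π L η)).symm.toLinearMap) ∧
      ((TensorProduct.assoc K H H (inducedSubspace K H B π L η)).toLinearMap
          ∘ₗ (TensorProduct.map Coalgebra.comul
                (LinearMap.id : (inducedSubspace K H B π L η) →ₗ[K]
                  (inducedSubspace K H B π L η))) ∘ₗ β
        = (TensorProduct.map (LinearMap.id : H →ₗ[K] H) β) ∘ₗ β) := by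
  let R : H →ₗ[K] H ⊗[K] B := (TensorProduct.map (LinearMap.id : H →ₗ[K] H) (π : H →ₗ[K] B))
        ∘ₗ Coalgebra.comul
  let I : H →ₗ[K] H ⊗[K] B := (TensorProduct.mk K H B).flip (1 : B)
  have hR := aux_comm (L := L) R (by
    have e : (TensorProduct.map (LinearMap.id : H →ₗ[K] H) (TensorProduct.map
        (LinearMap.id : H →ₗ[K] H) (π : H →ₗ[K] B))) ∘ₗ (TensorProduct.assoc K H H H).toLinearMap
        ∘ₗ (Coalgebra.comul.rTensor H) = (TensorProduct.assoc K H H B).toLinearMap ∘ₗ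
        (TensorProduct.map Coalgebra.comul LinearMap.id) ∘ₗ
        (TensorProduct.map (LinearMap.id : H →ₗ[K] H) (π : H →ₗ[K] B)) := by
      ext a b
      simp only [TensorProduct.AlgebraTensorModule.curry_apply, LinearMap.restrictScalars_self,
        TensorProduct.curry_apply, LinearMap.comp_apply, TensorProduct.map_tmul,
        LinearEquiv.coe_coe, LinearMap.rTensor_tmul, LinearMap.id_apply]
      induction (Coalgebra.comul (R := K) a) with
      | zero => simp
      | add x y hx hy => simp only [TensorProduct.add_tmul, map_add, hx, hy]
      | tmul x y => simp
    ext x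
    have e1 := LinearMap.congr_fun e (Coalgebra.comul x)
    simp only [LinearMap.comp_apply, LinearEquiv.coe_coe, Coalgebra.coassoc_apply] at e1
    simp only [R, LinearMap.comp_apply, LinearEquiv.coe_coe]
    rw [← e1]
    change LinearMap.lTensor H _ _ = LinearMap.lTensor H _ _
    rw [← LinearMap.lTensor_comp_apply])
  have hI := aux_comm (L := L) I (by
    ext x
    simp only [I, LinearMap.comp_apply, LinearEquiv.coe_coe, LinearMap.flip_apply,
      TensorProduct.mk_apply, TensorProduct.map_tmul]
    induction (Coalgebra.comul (R := K) x) with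
    | zero => simp
    | add x y hx hy => simp only [TensorProduct.add_tmul, map_add, hx, hy]
    | tmul x y => simp)
  let f : H ⊗[K] L →ₗ[K] (H ⊗[K] B) ⊗[K] L := TensorProduct.map R LinearMap.id -
    TensorProduct.map I LinearMap.id
  have hS : inducedSubspace K H B π L η = LinearMap.ker f := by
    ext w
    have hm : w ∈ inducedSubspace K H B π L η ↔ ∀ b : B,
      TensorProduct.map R (η ∘ₗ TensorProduct.mk K B L b) w
      = TensorProduct.map I (η ∘ₗ TensorProduct.mk K B L b) w := Iff.rfl
    rw [hm, LinearMap.mem_ker, LinearMap.sub_apply, sub_eq_zero]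
    constructor
    · intro h
      have h1 : η ∘ₗ TensorProduct.mk K B L 1 = LinearMap.id := by
        ext l
        simp [hη1]
      have := h 1
      rwa [h1] at this
    · intro h b
      have := congrArg (LinearMap.lTensor (H ⊗[K] B) (η ∘ₗ TensorProduct.mk K B L b)) h
      simpa only [LinearMap.lTensor, ← LinearMap.comp_apply, ← TensorProduct.map_comp,
        LinearMap.id_comp, LinearMap.comp_id] using this
  refine aux_main _ f hS ?_
  intro w hw
  rw [hS, LinearMap.mem_ker, LinearMap.sub_apply, sub_eq_zero] at hw
  rw [LinearMap.lTensor_sub, LinearMap.sub_apply, sub_eq_zero]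
  refine (LinearMap.congr_fun hR w).trans (Eq.trans ?_ (LinearMap.congr_fun hI w).symm)
  rw [LinearMap.comp_apply, hw]
  rfl
end

section
/- Let H be a Hopf algebra over a field K, (B, π) a quantum subgroup of H, and (L, η) a left B-module, and let L' = { w ∈ H ⊗ L : for all b ∈ B, (R ⊗ η_b)(w) = (ι ⊗ η_b)(w) } where R = (id_H ⊗ π) ∘ Δ. Then the assignment φ_H(h ⊗ h' ⊗ w) = h' ⊗ (id_H ⊗ η_{π(h)})(w) for h, h' ∈ H and w ∈ L' (on pure tensors w = h'' ⊗ l, φ_H(h ⊗ h' ⊗ h'' ⊗ l) = h' ⊗ h'' ⊗ η(π(h) ⊗ l)) takes values in H ⊗ L' and defines a left H-module structure on H ⊗ L': φ_H(1 ⊗ z) = z and φ_H(h ⊗ φ_H(h' ⊗ z)) = φ_H(hh' ⊗ z) for all h, h' ∈ H and z ∈ H ⊗ L'. -/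
open TensorProduct

/-- The assignment `φ_H(h ⊗ h' ⊗ w) = h' ⊗ (id_H ⊗ η_{π(h)})(w)` takes values in
`H ⊗ L'` and defines a left `H`-module structure on `H ⊗ L'`. -/
theorem inducedSubspace_consistency_module_structure
    (K : Type*) [Field K]
    (H : Type*) [Ring H] [HopfAlgebra K H]
    (B : Type*) [Ring B] [Bialgebra K B]
    (π : H →ₐc[K] B) (hπ : Function.Surjective π)
    (L : Type*) [AddCommGroup L] [Module K L]
    (η : B ⊗[K] L →ₗ[K] L)
    (hη1 : ∀ l : L, η ((1 : B) ⊗ₜ[K] l) = l)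
    (hη2 : ∀ (b b' : B) (l : L),
      η (b ⊗ₜ[K] η (b' ⊗ₜ[K] l)) = η ((b * b') ⊗ₜ[K] l)) :
    ∃ φH : H ⊗[K] (H ⊗[K] (inducedSubspace K H B π L η)) →ₗ[K]
        H ⊗[K] (inducedSubspace K H B π L η),
      -- φ_H is given by φ_H(h ⊗ h' ⊗ w) = h' ⊗ (id_H ⊗ η_{π(h)})(w)
      (∀ (h h' : H) (w : inducedSubspace K H B π L η),
        (TensorProduct.map (LinearMap.id : H →ₗ[K] H)
            (inducedSubspace K H B π L η).subtype)
          (φH (h ⊗ₜ[K] (h' ⊗ₜ[K] w)))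
        = h' ⊗ₜ[K] (TensorProduct.map (LinearMap.id : H →ₗ[K] H)
            (η ∘ₗ TensorProduct.mk K B L (π h)) (w : H ⊗[K] L))) ∧
      -- φ_H is a left H-module structure on H ⊗ L'
      (∀ z : H ⊗[K] (inducedSubspace K H B π L η), φH ((1 : H) ⊗ₜ[K] z) = z) ∧
      (∀ (h h' : H) (z : H ⊗[K] (inducedSubspace K H B π L η)),
        φH (h ⊗ₜ[K] φH (h' ⊗ₜ[K] z)) = φH ((h * h') ⊗ₜ[K] z)) := by
  have hcomp : ∀ b c : B, (η ∘ₗ TensorProduct.mk K B L b) ∘ₗ (η ∘ₗ TensorProduct.mk K B L c)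
      = η ∘ₗ TensorProduct.mk K B L (b * c) := by
    intro b c
    ext l
    simp [hη2]
  have hmem : ∀ (c : B) (w : H ⊗[K] L), w ∈ inducedSubspace K H B π L η →
      (η ∘ₗ TensorProduct.mk K B L c).lTensor H w ∈ inducedSubspace K H B π L η := by
    intro c w hw b
    have := hw (b * c)
    rw [← hcomp] at this
    rw [← LinearMap.comp_apply, ← LinearMap.comp_apply, LinearMap.map_comp_lTensor,
      LinearMap.map_comp_lTensor]
    exact this
  let act : B →ₗ[K] (inducedSubspace K H B π L η) →ₗ[K] (inducedSubspace K H B π L η) :=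
    { toFun := fun c => ((η ∘ₗ TensorProduct.mk K B L c).lTensor H).restrict (hmem c)
      map_add' := by
        intro x y
        ext w
        simp [LinearMap.restrict_apply, LinearMap.comp_add, LinearMap.lTensor_add]
      map_smul' := by
        intro x y
        ext w
        simp [LinearMap.restrict_apply, LinearMap.comp_smul, LinearMap.lTensor_smul] }
  have hact : ∀ (c : B) (w : inducedSubspace K H B π L η),
      (act c w : H ⊗[K] L) = (η ∘ₗ TensorProduct.mk K B L c).lTensor H (w : H ⊗[K] L) :=
    fun _ _ => rfl
  have hact1 : act 1 = LinearMap.id := by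
    ext1 w
    apply Subtype.ext
    rw [hact]
    have : η ∘ₗ TensorProduct.mk K B L 1 = LinearMap.id := by
      ext l
      simp [hη1]
    rw [this]
    simp
  have hact2 : ∀ b c, act b ∘ₗ act c = act (b * c) := by
    intro b c
    ext1 w
    apply Subtype.ext
    rw [LinearMap.comp_apply, hact, hact, hact, ← hcomp, ← LinearMap.comp_apply, ← LinearMap.lTensor_comp]
  let φ : H →ₗ[K] (H ⊗[K] (inducedSubspace K H B π L η)) →ₗ[K]
      (H ⊗[K] (inducedSubspace K H B π L η)) :=
    (LinearMap.lTensorHom H) ∘ₗ act ∘ₗ (π : H →ₗ[K] B)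
  have hφ : ∀ h z, TensorProduct.lift φ (h ⊗ₜ[K] z) = (act (π h)).lTensor H z :=
    fun _ _ => rfl
  refine ⟨TensorProduct.lift φ, ?_, ?_, ?_⟩
  · intro h h' w
    rw [hφ]
    rfl
  · intro z
    rw [hφ, map_one, hact1]
    simp
  · intro h h' z
    rw [hφ, hφ, hφ, map_mul, ← hact2, LinearMap.lTensor_comp]
    rfl
end

section
/- Let H be a Hopf algebra over a field K, (B, π) a quantum subgroup of H, and (L, η) a left B-module, and let L' = { w ∈ H ⊗ L : for all b ∈ B, (R ⊗ η_b)(w) = (ι ⊗ η_b)(w) } where R = (id_H ⊗ π) ∘ Δ. Define α : H ⊗ L' → L' by α(h ⊗ w) = (id_H ⊗ η_{π(h)})(w), β : L' → H ⊗ L' as the restriction of Δ ⊗ id_L, and φ_H : H ⊗ (H ⊗ L') → H ⊗ L' by φ_H(h ⊗ h' ⊗ w) = h' ⊗ (id_H ⊗ η_{π(h)})(w). Then β is a left H-module homomorphism with respect to α and φ_H, i.e. β ∘ α = φ_H ∘ (id_H ⊗ β) as K-linear maps H ⊗ L' → H ⊗ L'; consequently (L', α, β, φ_H) is a left Hopf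 representation of H of the first type. -/
open TensorProduct

/-- With `α(h ⊗ w) = (id_H ⊗ η_{π(h)})(w)`, `β` the restriction of `Δ ⊗ id_L` to `L'`,
and `φ_H(h ⊗ h' ⊗ w) = h' ⊗ (id_H ⊗ η_{π(h)})(w)`, the map `β` is a left `H`-module
homomorphism with respect to `α` and `φ_H`, i.e. `β ∘ α = φ_H ∘ (id_H ⊗ β)`;
consequently `(L', α, β, φ_H)` is a left Hopf representation of `H` of the first
type. -/
theorem inducedSubspace_first_type_hopf_representation
    (K : Type*) [Field K]
    (H : Type*) [Ring H] [HopfAlgebra K H]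
    (B : Type*) [Ring B] [Bialgebra K B]
    (π : H →ₐc[K] B) (hπ : Function.Surjective π)
    (L : Type*) [AddCommGroup L] [Module K L]
    (η : B ⊗[K] L →ₗ[K] L)
    (hη1 : ∀ l : L, η ((1 : B) ⊗ₜ[K] l) = l)
    (hη2 : ∀ (b b' : B) (l : L),
      η (b ⊗ₜ[K] η (b' ⊗ₜ[K] l)) = η ((b * b') ⊗ₜ[K] l))
    (α : H ⊗[K] (inducedSubspace K H B π L η) →ₗ[K] (inducedSubspace K H B π L η))
    (hα : ∀ (h : H) (w : inducedSubspace K H B π L η),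
      ((α (h ⊗ₜ[K] w) : inducedSubspace K H B π L η) : H ⊗[K] L)
        = TensorProduct.map (LinearMap.id : H →ₗ[K] H)
            (η ∘ₗ TensorProduct.mk K B L (π h)) (w : H ⊗[K] L))
    (β : (inducedSubspace K H B π L η) →ₗ[K] H ⊗[K] (inducedSubspace K H B π L η))
    (hβ : (TensorProduct.map (LinearMap.id : H →ₗ[K] H)
        (inducedSubspace K H B π L η).subtype) ∘ₗ β
      = (TensorProduct.assoc K H H L).toLinearMap
          ∘ₗ (TensorProduct.map Coalgebra.comul (LinearMap.id : L →ₗ[K] L))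
          ∘ₗ (inducedSubspace K H B π L η).subtype)
    (φH : H ⊗[K] (H ⊗[K] (inducedSubspace K H B π L η)) →ₗ[K]
        H ⊗[K] (inducedSubspace K H B π L η))
    (hφH : ∀ (h h' : H) (w : inducedSubspace K H B π L η),
      (TensorProduct.map (LinearMap.id : H →ₗ[K] H)
          (inducedSubspace K H B π L η).subtype)
        (φH (h ⊗ₜ[K] (h' ⊗ₜ[K] w)))
      = h' ⊗ₜ[K] (TensorProduct.map (LinearMap.id : H →ₗ[K] H)
          (η ∘ₗ TensorProduct.mk K B L (π h)) (w : H ⊗[K] L))) :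
    -- β is a left H-module homomorphism with respect to α and φ_H
    (β ∘ₗ α = φH ∘ₗ (TensorProduct.map (LinearMap.id : H →ₗ[K] H) β)) ∧
    -- (L', α) is a left H-module
    (∀ w : inducedSubspace K H B π L η, α ((1 : H) ⊗ₜ[K] w) = w) ∧
    (∀ (h h' : H) (w : inducedSubspace K H B π L η),
      α (h ⊗ₜ[K] α (h' ⊗ₜ[K] w)) = α ((h * h') ⊗ₜ[K] w)) ∧
    -- (L', β) is a left H-comodule
    ((TensorProduct.map Coalgebra.counit
        (LinearMap.id : (inducedSubspace K H B π L η) →ₗ[K]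
          (inducedSubspace K H B π L η))) ∘ₗ β
      = (TensorProduct.lid K (inducedSubspace K H B π L η)).symm.toLinearMap) ∧
    ((TensorProduct.assoc K H H (inducedSubspace K H B π L η)).toLinearMap
        ∘ₗ (TensorProduct.map Coalgebra.comul
              (LinearMap.id : (inducedSubspace K H B π L η) →ₗ[K]
                (inducedSubspace K H B π L η))) ∘ₗ β
      = (TensorProduct.map (LinearMap.id : H →ₗ[K] H) β) ∘ₗ β) ∧
    -- (H ⊗ L', φ_H) is a left H-module
    (∀ z : H ⊗[K] (inducedSubspace K H B π L η), φH ((1 : H) ⊗ₜ[K] z) = z) ∧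
    (∀ (h h' : H) (z : H ⊗[K] (inducedSubspace K H B π L η)),
      φH (h ⊗ₜ[K] φH (h' ⊗ₜ[K] z)) = φH ((h * h') ⊗ₜ[K] z)) := by
  generalize inducedSubspace K H B π L η = S at *
  have hJ : Function.Injective (TensorProduct.map (LinearMap.id : H →ₗ[K] H) S.subtype) :=
    Module.Flat.lTensor_preserves_injective_linearMap (M := H) S.subtype
      S.injective_subtype
  have hJJ : Function.Injective (TensorProduct.map (LinearMap.id : H →ₗ[K] H)
      (TensorProduct.map (LinearMap.id : H →ₗ[K] H) S.subtype)) :=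
    Module.Flat.lTensor_preserves_injective_linearMap (M := H) _ hJ
  have hβ' : ∀ w : S, TensorProduct.map (LinearMap.id : H →ₗ[K] H) S.subtype (β w)
      = TensorProduct.assoc K H H L
        (TensorProduct.map Coalgebra.comul (LinearMap.id : L →ₗ[K] L) (w : H ⊗[K] L)) :=
    fun w => LinearMap.congr_fun hβ w
  have hφ : ∀ (h : H) (z : H ⊗[K] S),
      φH (h ⊗ₜ[K] z) = TensorProduct.map (LinearMap.id : H →ₗ[K] H)
        (α ∘ₗ TensorProduct.mk K H S h) z := by
    intro h z
    induction z with
    | zero => simp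
    | add x y hx hy => rw [tmul_add, map_add, map_add, hx, hy]
    | tmul h' w =>
      apply hJ
      rw [hφH]
      simp [hα]
  have hα1 : ∀ w : S, α ((1 : H) ⊗ₜ[K] w) = w := by
    intro w
    apply Subtype.ext
    rw [hα]
    have : η ∘ₗ TensorProduct.mk K B L (π 1) = LinearMap.id := by
      ext l; simp [hη1]
    rw [this, TensorProduct.map_id]; rfl
  have hα2 : ∀ (h h' : H) (w : S),
      α (h ⊗ₜ[K] α (h' ⊗ₜ[K] w)) = α ((h * h') ⊗ₜ[K] w) := by
    intro h h' w
    apply Subtype.ext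
    rw [hα, hα, hα, ← LinearMap.comp_apply, ← TensorProduct.map_comp]
    have : (η ∘ₗ TensorProduct.mk K B L (π h)) ∘ₗ (η ∘ₗ TensorProduct.mk K B L (π h'))
        = η ∘ₗ TensorProduct.mk K B L (π (h * h')) := by
      ext l; simp [hη2]
    rw [this]; rfl
  refine ⟨?_, hα1, hα2, ?_, ?_, ?_, ?_⟩
  · apply TensorProduct.ext'
    intro h w
    simp only [LinearMap.comp_apply, TensorProduct.map_tmul, LinearMap.id_apply]
    apply hJ
    rw [hφ, hβ', hα, ← LinearMap.comp_apply (TensorProduct.map _ S.subtype),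
      ← TensorProduct.map_comp]
    have h1 : S.subtype ∘ₗ (α ∘ₗ TensorProduct.mk K H S h)
        = TensorProduct.map (LinearMap.id : H →ₗ[K] H)
            (η ∘ₗ TensorProduct.mk K B L (π h)) ∘ₗ S.subtype := by
      ext w; exact hα h w
    rw [h1, TensorProduct.map_comp, LinearMap.comp_apply, hβ']
    generalize (w : H ⊗[K] L) = x
    induction x with
    | zero => simp
    | add x y hx hy => simp only [map_add, hx, hy]
    | tmul a l =>
      simp only [TensorProduct.map_tmul, LinearMap.id_apply]
      generalize (Coalgebra.comul a : H ⊗[K] H) = d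
      induction d with
      | zero => simp
      | add x y hx hy => simp only [add_tmul, map_add, hx, hy]
      | tmul a b => simp
  · ext w : 1
    apply (TensorProduct.lid K S).injective
    apply Subtype.ext
    have h1 : ∀ z : H ⊗[K] S,
        ((TensorProduct.lid K S (TensorProduct.map Coalgebra.counit LinearMap.id z) : S)
          : H ⊗[K] L)
        = TensorProduct.lid K (H ⊗[K] L) (TensorProduct.map Coalgebra.counit LinearMap.id
          (TensorProduct.map (LinearMap.id : H →ₗ[K] H) S.subtype z)) := by
      intro z
      induction z with
      | zero => simp
      | add x y hx hy => simp only [map_add, Submodule.coe_add, hx, hy]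
      | tmul a b => simp
    rw [LinearMap.comp_apply, h1, hβ']
    simp only [LinearEquiv.coe_coe, LinearEquiv.apply_symm_apply]
    generalize (w : H ⊗[K] L) = x
    induction x with
    | zero => simp
    | add x y hx hy => simp only [map_add, hx, hy]
    | tmul a l =>
      simp only [TensorProduct.map_tmul, LinearMap.id_apply]
      have h2 : ∀ d : H ⊗[K] H,
          TensorProduct.lid K (H ⊗[K] L) (TensorProduct.map Coalgebra.counit LinearMap.id
            (TensorProduct.assoc K H H L (d ⊗ₜ[K] l)))
          = (TensorProduct.lid K H (LinearMap.rTensor H Coalgebra.counit d)) ⊗ₜ[K] l := by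
        intro d
        induction d with
        | zero => simp
        | add x y hx hy => simp only [add_tmul, map_add, hx, hy]
        | tmul a b => simp [smul_tmul']
      rw [h2, Coalgebra.rTensor_counit_comul]
      simp
  · ext w : 1
    apply hJJ
    have h1 : ∀ z : H ⊗[K] S,
        TensorProduct.map (LinearMap.id : H →ₗ[K] H)
          (TensorProduct.map (LinearMap.id : H →ₗ[K] H) S.subtype)
          (TensorProduct.assoc K H H S (TensorProduct.map Coalgebra.comul LinearMap.id z))
        = TensorProduct.assoc K H H (H ⊗[K] L) (TensorProduct.map Coalgebra.comul LinearMap.id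
          (TensorProduct.map (LinearMap.id : H →ₗ[K] H) S.subtype z)) := by
      intro z
      induction z with
      | zero => simp
      | add x y hx hy => simp only [map_add, hx, hy]
      | tmul a b =>
        simp only [TensorProduct.map_tmul, LinearMap.id_apply]
        generalize (Coalgebra.comul a : H ⊗[K] H) = d
        induction d with
        | zero => simp
        | add x y hx hy => simp only [add_tmul, map_add, hx, hy]
        | tmul a b => simp
    simp only [LinearMap.comp_apply, LinearEquiv.coe_coe]
    rw [h1, hβ', ← LinearMap.comp_apply (TensorProduct.map _ (TensorProduct.map _ S.subtype)),
      ← TensorProduct.map_comp, hβ, ← LinearMap.comp_assoc, TensorProduct.map_comp,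
      LinearMap.comp_apply, hβ']
    generalize (w : H ⊗[K] L) = x
    induction x with
    | zero => simp
    | add x y hx hy => simp only [map_add, hx, hy]
    | tmul a l =>
      simp only [TensorProduct.map_tmul, LinearMap.id_apply]
      have h2 : ∀ d : H ⊗[K] H,
          TensorProduct.assoc K H H (H ⊗[K] L) (TensorProduct.map Coalgebra.comul LinearMap.id
            (TensorProduct.assoc K H H L (d ⊗ₜ[K] l)))
          = LinearMap.lTensor H (TensorProduct.assoc K H H L).toLinearMap
            (TensorProduct.assoc K H (H ⊗[K] H) L
              ((TensorProduct.assoc K H H H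
                (LinearMap.rTensor H Coalgebra.comul d)) ⊗ₜ[K] l)) := by
        intro d
        induction d with
        | zero => simp
        | add x y hx hy => simp only [add_tmul, map_add, hx, hy]
        | tmul a b =>
          simp only [TensorProduct.assoc_tmul, TensorProduct.map_tmul, LinearMap.id_apply,
            LinearMap.rTensor_tmul]
          generalize (Coalgebra.comul a : H ⊗[K] H) = e
          induction e with
          | zero => simp
          | add x y hx hy => simp only [add_tmul, map_add, hx, hy]
          | tmul a b => simp
      rw [h2, Coalgebra.coassoc_apply]
      generalize (Coalgebra.comul a : H ⊗[K] H) = d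
      induction d with
      | zero => simp
      | add x y hx hy => simp only [add_tmul, map_add, hx, hy]
      | tmul a b => simp
  · intro z
    rw [hφ]
    have : α ∘ₗ TensorProduct.mk K H S 1 = LinearMap.id := by
      ext1 w; exact hα1 w
    rw [this, TensorProduct.map_id]; rfl
  · intro h h' z
    rw [hφ, hφ, hφ, ← LinearMap.comp_apply, ← TensorProduct.map_comp]
    have : (α ∘ₗ TensorProduct.mk K H S h) ∘ₗ (α ∘ₗ TensorProduct.mk K H S h')
        = α ∘ₗ TensorProduct.mk K H S (h * h') := by
      ext1 w; exact hα2 h h' w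
    rw [this]; rfl
end
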